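/- For every α ∈ (0,1), every nonuniform time mesh, and all indices k ≥ 3 and 1 ≤ j ≤ k−2, the L2-1_σ coefficients satisfy a_{j+1}^k − a_j^k < 0. -/

import Mathlib

open MeasureTheory Real Finset

noncomputable section

/-- Time step `τ_j = t_j - t_{j-1}`. -/
def tau (t : ℕ → ℝ) (j : ℕ) : ℝ := t j - t (j - 1)

/-- Step ratio `ρ_j = τ_j / τ_{j-1}`. -/
def rho (t : ℕ → ℝ) (j : ℕ) : ℝ := tau t j / tau t (j - 1)

/-- Offset node `t_k^* = t_{k-1} + σ τ_k` with `σ = 1 - α/2`. -/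
def tstar (α : ℝ) (t : ℕ → ℝ) (k : ℕ) : ℝ := t (k - 1) + (1 - α / 2) * tau t k

/-- L2-1_σ coefficient `a_j^k`. -/
def acoef (α : ℝ) (t : ℕ → ℝ) (j k : ℕ) : ℝ :=
  ∫ θ in (0:ℝ)..1,
    (-2 * tau t j * (1 - θ) - tau t (j + 1)) /
      ((tau t j + tau t (j + 1)) * (tstar α t k - (t (j - 1) + θ * tau t j)) ^ α)

/-- L2-1_σ coefficient `c_j^k`. -/
def ccoef (α : ℝ) (t : ℕ → ℝ) (j k : ℕ) : ℝ :=
  ∫ θ in (0:ℝ)..1,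
    (tau t j ^ 2 * (2 * θ - 1)) /
      (tau t (j + 1) * (tau t j + tau t (j + 1)) *
        (tstar α t k - (t (j - 1) + θ * tau t j)) ^ α)

/-- `d_j^k = c_{j-1}^k - a_j^k`. -/
def dcoef (α : ℝ) (t : ℕ → ℝ) (j k : ℕ) : ℝ := ccoef α t (j - 1) k - acoef α t j k

/-- The lower-triangular L2-1_σ matrix `M` (entries vanish above the diagonal and
for column index `0`). -/
def Mentry (α : ℝ) (t : ℕ → ℝ) (k j : ℕ) : ℝ :=
  if j = 0 ∨ k < j then 0
  else if j = k then ccoef α t (k - 1) k + (1 - α / 2) ^ (1 - α) / ((1 - α) * tau t k ^ α)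
  else if j = 1 then -acoef α t 1 k
  else dcoef α t j k

end

/-!
The integral defining `-a_j^k` averages the kernel `s ↦ (t_k^* - s)^(-α)` over the cell
`[t_{j-1}, t_j]` against a positive weight of total mass one. The kernel is strictly increasing
in `s`, so its value at the common node `t_j` separates the means over two neighbouring cells:
`-a_j^k ≤ (t_k^* - t_j)^(-α) < -a_{j+1}^k`.
-/

section WeightedMean

variable {a b : ℝ} {w f : ℝ → ℝ}

lemma integral_mul_le_of_monotoneOn (hab : a ≤ b) (hw : ContinuousOn w (Set.Icc a b))
    (hw_nonneg : ∀ x ∈ Set.Icc a b, 0 ≤ w x) (hf : MonotoneOn f (Set.Icc a b)) :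
    ∫ x in a..b, w x * f x ≤ (∫ x in a..b, w x) * f b := by
  rw [← Set.uIcc_of_le hab] at hw hf
  rw [← intervalIntegral.integral_mul_const]
  refine intervalIntegral.integral_mono_on hab (hf.intervalIntegrable.continuousOn_mul hw)
    (hw.intervalIntegrable.mul_const _) fun x hx ↦ ?_
  exact mul_le_mul_of_nonneg_left
    (hf (Set.Icc_subset_uIcc hx) Set.right_mem_uIcc hx.2) (hw_nonneg x hx)

lemma lt_integral_mul_of_strictMonoOn (hab : a < b) (hw : ContinuousOn w (Set.Icc a b))
    (hw_pos : ∀ x ∈ Set.Ioo a b, 0 < w x) (hf : StrictMonoOn f (Set.Icc a b)) :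
    (∫ x in a..b, w x) * f a < ∫ x in a..b, w x * f x := by
  have hfa : ∀ x ∈ Set.Ioo a b, f a < f x := fun x hx ↦
    hf (Set.left_mem_Icc.2 hab.le) (Set.Ioo_subset_Icc_self hx) hx.1
  have hf_mono := hf.monotoneOn
  rw [← Set.uIcc_of_le hab.le] at hw hf_mono
  have hwf := hf_mono.intervalIntegrable.continuousOn_mul (μ := volume) hw
  have hwfa := hw.intervalIntegrable (μ := volume) |>.mul_const (f a)
  rw [← intervalIntegral.integral_mul_const, ← sub_pos, ← intervalIntegral.integral_sub hwf hwfa]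
  refine intervalIntegral.intervalIntegral_pos_of_pos_on (hwf.sub hwfa) (fun x hx ↦ ?_) hab
  exact sub_pos.2 (mul_lt_mul_of_pos_left (hfa x hx) (hw_pos x hx))

end WeightedMean

section SlopeWeight

/-- The weight on `[0, 1]` with which the L2-1_σ coefficient `-a_j^k` averages the kernel over
the cell of length `p = τ_j`, the next cell having length `q = τ_{j+1}`. -/
noncomputable def slopeWeight (p q θ : ℝ) : ℝ := (2 * p * (1 - θ) + q) / (p + q)

lemma continuous_slopeWeight (p q : ℝ) : Continuous (slopeWeight p q) := by
  unfold slopeWeight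
  fun_prop

variable {p q : ℝ}

lemma slopeWeight_pos {θ : ℝ} (hp : 0 < p) (hq : 0 < q) (hθ : θ ≤ 1) :
    0 < slopeWeight p q θ := by
  have : 0 ≤ 1 - θ := sub_nonneg.2 hθ
  unfold slopeWeight
  positivity

lemma integral_slopeWeight (hpq : p + q ≠ 0) : ∫ θ in (0 : ℝ)..1, slopeWeight p q θ = 1 := by
  have h_primitive (θ : ℝ) :
      HasDerivAt (fun θ ↦ (q * θ - p * (1 - θ) ^ 2) / (p + q)) (slopeWeight p q θ) θ := by
    have h := ((hasDerivAt_id θ).const_mul q).sub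
      ((((hasDerivAt_id θ).const_sub 1).pow 2).const_mul p)
    refine (h.div_const (p + q)).congr_deriv ?_
    simp only [slopeWeight, id_eq]
    ring
  rw [intervalIntegral.integral_eq_sub_of_hasDerivAt (fun θ _ ↦ h_primitive θ)
    ((continuous_slopeWeight p q).intervalIntegrable 0 1)]
  field_simp
  ring

end SlopeWeight

/-- The kernel `s ↦ (T - s)^(-α)` of the Caputo derivative of order `α` at time `T`, without the
normalising factor `1 / Γ(1 - α)`. -/
noncomputable def caputoKernel (α T s : ℝ) : ℝ := ((T - s) ^ α)⁻¹

lemma strictMonoOn_caputoKernel {α : ℝ} (hα : 0 < α) (T : ℝ) :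
    StrictMonoOn (caputoKernel α T) (Set.Iio T) := by
  intro r _ s hs hrs
  have hTs : 0 < T - s := sub_pos.2 hs
  exact inv_strictAnti₀ (rpow_pos_of_pos hTs α)
    (rpow_lt_rpow hTs.le (sub_lt_sub_left hrs T) hα)

lemma strictMonoOn_caputoKernel_add_mul {α T s τ : ℝ} (hα : 0 < α) (hτ : 0 < τ)
    (hT : s + τ < T) :
    StrictMonoOn (fun θ ↦ caputoKernel α T (s + θ * τ)) (Set.Icc 0 1) := by
  have h_affine : StrictMono fun θ : ℝ ↦ s + θ * τ :=
    (strictMono_id.mul_const hτ).const_add s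
  refine (strictMonoOn_caputoKernel hα T).comp (h_affine.strictMonoOn _) fun θ hθ ↦ ?_
  calc s + θ * τ ≤ s + 1 * τ := h_affine.monotone hθ.2
    _ < T := by rwa [one_mul]

section Coefficient

lemma neg_acoef_eq_integral (α : ℝ) (t : ℕ → ℝ) (j k : ℕ) :
    -acoef α t j k = ∫ θ in (0 : ℝ)..1, slopeWeight (tau t j) (tau t (j + 1)) θ *
      caputoKernel α (tstar α t k) (t (j - 1) + θ * tau t j) := by
  rw [acoef, ← intervalIntegral.integral_neg]
  congr 1 with θ
  simp only [slopeWeight, caputoKernel, div_eq_mul_inv, mul_inv]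
  ring

lemma sub_one_add_tau (t : ℕ → ℝ) (j : ℕ) : t (j - 1) + tau t j = t j :=
  add_sub_cancel _ _

variable {α : ℝ} {t : ℕ → ℝ} {j k : ℕ}

lemma tau_pos (ht : StrictMono t) (hj : 1 ≤ j) : 0 < tau t j :=
  sub_pos.2 (ht (Nat.sub_one_lt_of_le hj le_rfl))

lemma lt_tstar (hα : α < 2) (ht : StrictMono t) (hjk : j < k) : t j < tstar α t k := by
  have h_offset : 0 < (1 - α / 2) * tau t k :=
    mul_pos (by linarith) (tau_pos ht (Nat.one_le_of_lt hjk))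
  calc t j ≤ t (k - 1) := ht.monotone (Nat.le_sub_one_of_lt hjk)
    _ < tstar α t k := lt_add_of_pos_right _ h_offset

lemma neg_acoef_le_caputoKernel (hα : 0 < α) (hτ : 0 < tau t j) (hτ' : 0 < tau t (j + 1))
    (hjk : t j < tstar α t k) :
    -acoef α t j k ≤ caputoKernel α (tstar α t k) (t j) := by
  rw [← sub_one_add_tau t j] at hjk
  have h := integral_mul_le_of_monotoneOn zero_le_one
    (continuous_slopeWeight (tau t j) (tau t (j + 1))).continuousOn
    (fun θ hθ ↦ (slopeWeight_pos hτ hτ' hθ.2).le)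
    (strictMonoOn_caputoKernel_add_mul hα hτ hjk).monotoneOn
  rwa [← neg_acoef_eq_integral, integral_slopeWeight (add_pos hτ hτ').ne', one_mul, one_mul,
    sub_one_add_tau] at h

lemma caputoKernel_lt_neg_acoef (hα : 0 < α) (hτ : 0 < tau t j) (hτ' : 0 < tau t (j + 1))
    (hjk : t j < tstar α t k) :
    caputoKernel α (tstar α t k) (t (j - 1)) < -acoef α t j k := by
  rw [← sub_one_add_tau t j] at hjk
  have h := lt_integral_mul_of_strictMonoOn zero_lt_one
    (continuous_slopeWeight (tau t j) (tau t (j + 1))).continuousOn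
    (fun θ hθ ↦ slopeWeight_pos hτ hτ' hθ.2.le)
    (strictMonoOn_caputoKernel_add_mul hα hτ hjk)
  rwa [← neg_acoef_eq_integral, integral_slopeWeight (add_pos hτ hτ').ne', one_mul, zero_mul,
    add_zero] at h

end Coefficient

theorem acoef_diff_j_neg_general {α : ℝ} (hα : α ∈ Set.Ioo (0 : ℝ) 2) {t : ℕ → ℝ}
    (ht : StrictMono t) {k j : ℕ} (hj : 1 ≤ j) (hjk : j + 1 < k) :
    acoef α t (j + 1) k - acoef α t j k < 0 := by
  have hτ (i : ℕ) (hi : 1 ≤ i) : 0 < tau t i := tau_pos ht hi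
  have h_left : -acoef α t j k ≤ caputoKernel α (tstar α t k) (t j) :=
    neg_acoef_le_caputoKernel hα.1 (hτ j hj) (hτ (j + 1) (by lia))
      (lt_tstar hα.2 ht (by lia))
  have h_right : caputoKernel α (tstar α t k) (t j) < -acoef α t (j + 1) k :=
    caputoKernel_lt_neg_acoef hα.1 (hτ (j + 1) (by lia)) (hτ (j + 2) (by lia))
      (lt_tstar hα.2 ht hjk)
  exact sub_neg.2 (neg_lt_neg_iff.1 (h_left.trans_lt h_right))

/-- (P3): `a_{j+1}^k - a_j^k < 0` for `k ≥ 3`, `1 ≤ j ≤ k-2`. -/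
theorem acoef_diff_j_neg (α : ℝ) (hα : α ∈ Set.Ioo (0:ℝ) 1)
    (t : ℕ → ℝ) (ht0 : t 0 = 0) (hmono : StrictMono t)
    (k j : ℕ) (hk : 3 ≤ k) (hj1 : 1 ≤ j) (hj2 : j ≤ k - 2) :
    acoef α t (j + 1) k - acoef α t j k < 0 :=
  acoef_diff_j_neg_general ⟨hα.1, hα.2.trans one_lt_two⟩ hmono hj1 (by lia)
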